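/- Fix an integer K ≥ 2 and p ∈ (0,1). For each integer q ≥ 2 define (with log the natural logarithm) C(q) = ( p^K / ( q·log q·(q−1)^K ) ) · [ q·((q−1)/p)^K · ( K·log((q−1)/p) + log q ) − Φ(q) ] − K·H_q(p), where Φ(q) = Σ_{(r_0,…,r_{q−1}) ∈ ℕ^q, Σ_i r_i = K} ( K! / (r_0!···r_{q−1}!) ) · ( Σ_{i=0}^{q−1} ((1−p)(q−1)/p)^{r_i} ) · log( Σ_{i=0}^{q−1} ((1−p)(q−1)/p)^{r_i} ) and H_q(p) = ( p·log(q−1) − p·log p − (1−p)·log(1−p) ) / log q. Then lim_{q→∞} C(q) = 1 − p^K. -/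

import Mathlib

open scoped BigOperators

/-- The q-ary entropy function (natural logarithms). -/
noncomputable def Hq (q : ℕ) (p : ℝ) : ℝ :=
  (p * Real.log ((q : ℝ) - 1) - p * Real.log p - (1 - p) * Real.log (1 - p)) /
    Real.log (q : ℝ)

/-- Φ(q) = Σ_{(r_0,…,r_{q−1}) ∈ ℕ^q, Σ r_i = K} (K!/(r_0!···r_{q−1}!))·
(Σ_i ((1−p)(q−1)/p)^{r_i})·log(Σ_i ((1−p)(q−1)/p)^{r_i}). -/
noncomputable def PhiDMS (q K : ℕ) (p : ℝ) : ℝ :=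
  ∑ r ∈ (Fintype.piFinset fun _ : Fin q => Finset.range (K + 1)).filter
      (fun r => ∑ i, r i = K),
    ((K.factorial : ℝ) / ∏ i, ((r i).factorial : ℝ)) *
      (∑ i, ((1 - p) * ((q : ℝ) - 1) / p) ^ (r i)) *
      Real.log (∑ i, ((1 - p) * ((q : ℝ) - 1) / p) ^ (r i))

/-- The capacity of the K-draw q-ary symmetric channel DMS_{q,K}(p). -/
noncomputable def capDMS (q K : ℕ) (p : ℝ) : ℝ :=
  (p ^ K / ((q : ℝ) * Real.log (q : ℝ) * ((q : ℝ) - 1) ^ K)) *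
      ((q : ℝ) * (((q : ℝ) - 1) / p) ^ K *
          ((K : ℝ) * Real.log (((q : ℝ) - 1) / p) + Real.log (q : ℝ)) -
        PhiDMS q K p) -
    (K : ℝ) * Hq q p

/-! Let `x = (1 - p)(q - 1)/p`, and give an output in which symbol `i` occurs `r i` times the
likelihood sum `L = ∑ i, x ^ r i`. Divided by `q ((q - 1)/p) ^ K`, the sum `Φ(q)` becomes the mean
of `log L` over the outputs of a fixed input `i`, and then `r i` is binomial, with mean `K (1 - p)`
and `ℙ(r i = 0) = p ^ K`. When `r i > 0`, bound `L` below by `x ^ r i`; when `r i = 0`, by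
`q - K`, since at least that many symbols do not occur. This gives
`log L ≥ (r i + 𝟙[r i = 0]) log q - O(1)`. Conversely, the terms `x ^ r j` with `j ≠ i` have sum
`O(q)` in the mean, so that the mean of `log L` exceeds that of `(r i + 𝟙[r i = 0]) log q` by at
most `O(1)`. Hence `Φ(q)`, normalised, is asymptotic to `(K (1 - p) + p ^ K) log q`, while the other
terms of `C(q)` tend to `K + 1 - K p`. -/

open Finset Filter Topology

section Multinomial

variable {ι : Type*} [Fintype ι] [DecidableEq ι]

theorem filter_piFinset_range_eq_piAntidiag (K : ℕ) :
    {r ∈ Fintype.piFinset fun _ : ι => range (K + 1) | ∑ i, r i = K} =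
      piAntidiag univ K := by
  ext r
  simp only [mem_filter, Fintype.mem_piFinset, mem_range, mem_piAntidiag, mem_univ, implies_true,
    and_true, and_iff_right_iff_imp]
  rintro rfl i
  exact Nat.lt_succ_of_le (single_le_sum (fun _ _ => Nat.zero_le _) (mem_univ i))

theorem sum_multinomial_mul_prod_pow {R : Type*} [CommSemiring R] (K : ℕ) (s : Finset ι)
    (x : ι → R) :
    ∑ r ∈ piAntidiag univ K, (Nat.multinomial univ r : R) * ∏ i ∈ s, x i ^ r i =
      (∑ i ∈ s, x i + (#sᶜ : R)) ^ K := by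
  have h_sum : ∑ i, (if i ∈ s then x i else 1) = ∑ i ∈ s, x i + (#sᶜ : R) := by
    simp [sum_ite, filter_not, compl_eq_univ_sdiff]
  rw [← h_sum, sum_pow_eq_sum_piAntidiag]
  simp only [ite_pow, one_pow, prod_ite_mem, univ_inter]

variable {R : Type*} [CommRing R]

theorem sum_multinomial_mul_pow (K : ℕ) (i : ι) (x : R) :
    ∑ r ∈ piAntidiag univ K, (Nat.multinomial univ r : R) * x ^ r i =
      (x + (Fintype.card ι - 1)) ^ K := by
  have h_card : 1 ≤ Fintype.card ι := Fintype.card_pos_iff.2 ⟨i⟩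
  simpa [card_compl, Nat.cast_sub h_card] using sum_multinomial_mul_prod_pow K {i} fun _ => x

theorem sum_multinomial_mul_zero_pow (K : ℕ) (i : ι) :
    ∑ r ∈ piAntidiag univ K, (Nat.multinomial univ r : R) * 0 ^ r i =
      (Fintype.card ι - 1) ^ K := by
  rw [sum_multinomial_mul_pow, zero_add]

theorem sum_multinomial_mul_pow_mul_pow (K : ℕ) {i j : ι} (hij : i ≠ j) (x : R) :
    ∑ r ∈ piAntidiag univ K, (Nat.multinomial univ r : R) * (x ^ r i * x ^ r j) =
      (2 * x + (Fintype.card ι - 2)) ^ K := by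
  have h_card : 2 ≤ Fintype.card ι := by
    simpa [card_pair hij] using card_le_univ ({i, j} : Finset ι)
  have h_sum := sum_multinomial_mul_prod_pow K {i, j} fun _ => x
  simpa only [prod_pair hij, sum_pair hij, card_compl, card_pair hij, Nat.cast_sub h_card,
    ← two_mul, Nat.cast_ofNat] using h_sum

theorem sum_multinomial_mul_natCast_mul_pow (K : ℕ) (i : ι) (x : R) :
    ∑ r ∈ piAntidiag univ K, (Nat.multinomial univ r : R) * (r i * x ^ r i) =
      K * (x * (x + (Fintype.card ι - 1)) ^ (K - 1)) := by
  have h_deriv : ∑ r ∈ piAntidiag univ K, (Nat.multinomial univ r : R) * (r i * x ^ (r i - 1)) =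
      K * (x + (Fintype.card ι - 1)) ^ (K - 1) := by
    simpa [Polynomial.derivative_pow, Polynomial.eval_finsetSum] using
      congrArg (fun f => (Polynomial.derivative f).eval x)
        (sum_multinomial_mul_pow K i (Polynomial.X : Polynomial R))
  rw [mul_left_comm, ← h_deriv, mul_sum]
  refine sum_congr rfl fun r _ => ?_
  rcases Nat.eq_zero_or_pos (r i) with h | h
  · simp [h]
  · rw [← mul_pow_sub_one h.ne']
    ring

end Multinomial

section LikelihoodSum

variable {ι : Type*} [Fintype ι] {x b : ℝ} {r : ι → ℕ}

/-- The sum over all inputs of the likelihood of an output in which symbol `i` occurs `r i` times,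
up to a factor common to all inputs; `x` is the likelihood ratio of a correct draw against a
given error. -/
noncomputable def likelihoodSum (x : ℝ) (r : ι → ℕ) : ℝ :=
  ∑ i, x ^ r i

theorem pow_le_likelihoodSum (hx : 0 ≤ x) (r : ι → ℕ) (i : ι) : x ^ r i ≤ likelihoodSum x r :=
  single_le_sum (f := fun i => x ^ r i) (fun _ _ => by positivity) (mem_univ i)

theorem card_sub_sum_le_likelihoodSum (hx : 0 ≤ x) (r : ι → ℕ) :
    (Fintype.card ι : ℝ) - ∑ i, (r i : ℝ) ≤ likelihoodSum x r := by
  have h_term : ∀ n : ℕ, 1 - (n : ℝ) ≤ x ^ n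
    | 0 => by simp
    | n + 1 => by
      push_cast
      linarith [pow_nonneg hx (n + 1), (n.cast_nonneg : (0 : ℝ) ≤ n)]
  simpa [likelihoodSum] using sum_le_sum fun i (_ : i ∈ univ) => h_term (r i)

/- Here and below, `0 ^ r i` is the indicator of `r i = 0`; written as a power, it can be averaged
by `sum_multinomial_mul_zero_pow`. -/
theorem le_pow_mul_log_likelihoodSum (hx : 0 ≤ x) (hr : ∑ i, r i < Fintype.card ι) (i : ι) :
    r i * x ^ r i * Real.log x + 0 ^ r i * Real.log (Fintype.card ι - (∑ i, r i : ℕ)) ≤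
      x ^ r i * Real.log (likelihoodSum x r) := by
  have h_pos : (0 : ℝ) < Fintype.card ι - (∑ i, r i : ℕ) := sub_pos.2 (by exact_mod_cast hr)
  rcases Nat.eq_zero_or_pos (r i) with h | h
  · have h_le := card_sub_sum_le_likelihoodSum hx r
    rw [← Nat.cast_sum] at h_le
    simpa [h] using Real.log_le_log h_pos h_le
  · rcases hx.eq_or_lt with rfl | hx_pos
    · simp [h.ne']
    · have h_log : r i * Real.log x ≤ Real.log (likelihoodSum x r) := by
        rw [← Real.log_pow]
        exact Real.log_le_log (by positivity) (pow_le_likelihoodSum hx r i)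
      rw [zero_pow h.ne', zero_mul, add_zero, mul_comm (r i : ℝ), mul_assoc]
      gcongr

theorem likelihoodSum_le [DecidableEq ι] (hx : 0 ≤ x) (hb : 0 ≤ b) (hxb : x ≤ b * Fintype.card ι)
    (r : ι → ℕ) (i : ι) :
    likelihoodSum x r ≤ (Fintype.card ι : ℝ) ^ (r i + 0 ^ r i) *
      (b ^ r i + (∑ j ∈ univ.erase i, x ^ r j) / Fintype.card ι) := by
  have h_card : (1 : ℝ) ≤ Fintype.card ι := by exact_mod_cast Fintype.card_pos_iff.2 ⟨i⟩
  have h_exp : r i + 0 ^ r i ≠ 0 := by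
    rcases eq_or_ne (r i) 0 with h | h <;> simp [h]
  have h_own : x ^ r i ≤ (Fintype.card ι : ℝ) ^ (r i + 0 ^ r i) * b ^ r i :=
    calc x ^ r i ≤ (b * Fintype.card ι) ^ r i := by gcongr
      _ = (Fintype.card ι : ℝ) ^ r i * b ^ r i := by rw [mul_pow, mul_comm]
      _ ≤ _ := by gcongr; exact Nat.le_add_right _ _
  have h_rest : ∑ j ∈ univ.erase i, x ^ r j ≤ (Fintype.card ι : ℝ) ^ (r i + 0 ^ r i) *
      ((∑ j ∈ univ.erase i, x ^ r j) / Fintype.card ι) := by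
    have : 0 ≤ ∑ j ∈ univ.erase i, x ^ r j := sum_nonneg fun _ _ => by positivity
    calc ∑ j ∈ univ.erase i, x ^ r j
        = (Fintype.card ι : ℝ) * ((∑ j ∈ univ.erase i, x ^ r j) / Fintype.card ι) := by field_simp
      _ ≤ _ := by gcongr; exact le_self_pow₀ h_card h_exp
  rw [likelihoodSum, ← add_sum_erase _ _ (mem_univ i), mul_add]
  exact add_le_add h_own h_rest

theorem log_likelihoodSum_le [DecidableEq ι] (hx : 0 ≤ x) (hb : 0 ≤ b)
    (hxb : x ≤ b * Fintype.card ι) (hr : ∑ i, r i < Fintype.card ι) (i : ι) :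
    Real.log (likelihoodSum x r) ≤ (r i + 0 ^ r i) * Real.log (Fintype.card ι) +
      (b ^ r i + (∑ j ∈ univ.erase i, x ^ r j) / Fintype.card ι) := by
  have h_card : (0 : ℝ) < Fintype.card ι := by exact_mod_cast Fintype.card_pos_iff.2 ⟨i⟩
  have h_pos : 0 < likelihoodSum x r :=
    (sub_pos.2 (by exact_mod_cast hr)).trans_le (card_sub_sum_le_likelihoodSum hx r)
  have h_le := likelihoodSum_le hx hb hxb r i
  set B := b ^ r i + (∑ j ∈ univ.erase i, x ^ r j) / Fintype.card ι
  have hB : 0 < B := pos_of_mul_pos_right (h_pos.trans_le h_le) (by positivity)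
  calc Real.log (likelihoodSum x r)
      ≤ Real.log ((Fintype.card ι : ℝ) ^ (r i + 0 ^ r i) * B) := Real.log_le_log h_pos h_le
    _ = (r i + 0 ^ r i) * Real.log (Fintype.card ι) + Real.log B := by
      rw [Real.log_mul (by positivity) hB.ne', Real.log_pow]
      push_cast
      rfl
    _ ≤ _ := by gcongr; exact Real.log_le_self hB.le

end LikelihoodSum

section Average

variable {ι : Type*} [Fintype ι] [DecidableEq ι] {K : ℕ} {x b : ℝ}

theorem le_sum_multinomial_mul_log_likelihoodSum (hx : 0 ≤ x) (hK : K < Fintype.card ι) (i : ι) :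
    K * (x * (x + (Fintype.card ι - 1)) ^ (K - 1)) * Real.log x +
        ((Fintype.card ι : ℝ) - 1) ^ K * Real.log (Fintype.card ι - K) ≤
      ∑ r ∈ piAntidiag univ K,
        (Nat.multinomial univ r : ℝ) * (x ^ r i * Real.log (likelihoodSum x r)) := by
  rw [← sum_multinomial_mul_natCast_mul_pow K i, ← sum_multinomial_mul_zero_pow K i, sum_mul,
    sum_mul, ← sum_add_distrib]
  refine sum_le_sum fun r hr => ?_
  obtain ⟨rfl, -⟩ := mem_piAntidiag.1 hr
  rw [mul_assoc, mul_assoc (Nat.multinomial univ r : ℝ), ← mul_add]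
  gcongr
  exact le_pow_mul_log_likelihoodSum hx hK i

theorem sum_multinomial_mul_sum_erase_le (hx : 0 ≤ x) (i : ι) :
    ∑ r ∈ piAntidiag univ K, (Nat.multinomial univ r : ℝ) *
        (x ^ r i * ((∑ j ∈ univ.erase i, x ^ r j) / Fintype.card ι)) ≤
      2 ^ K * (x + (Fintype.card ι - 1)) ^ K := by
  have h_card : (1 : ℝ) ≤ Fintype.card ι := by exact_mod_cast Fintype.card_pos_iff.2 ⟨i⟩
  have h_term : ∀ j ∈ univ.erase i, ∑ r ∈ piAntidiag univ K,
      (Nat.multinomial univ r : ℝ) * (x ^ r i * x ^ r j) ≤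
        2 ^ K * (x + (Fintype.card ι - 1)) ^ K := by
    intro j hj
    have h_two : (2 : ℝ) ≤ Fintype.card ι := by
      exact_mod_cast Fintype.one_lt_card_iff.2 ⟨j, i, ne_of_mem_erase hj⟩
    rw [sum_multinomial_mul_pow_mul_pow K (ne_of_mem_erase hj).symm, ← mul_pow]
    exact pow_le_pow_left₀ (by linarith) (by linarith) K
  have : 0 ≤ 2 ^ K * (x + (Fintype.card ι - 1)) ^ K := by
    have := sub_nonneg.2 h_card
    positivity
  calc _ = (∑ j ∈ univ.erase i, ∑ r ∈ piAntidiag univ K,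
        (Nat.multinomial univ r : ℝ) * (x ^ r i * x ^ r j)) / Fintype.card ι := by
        rw [sum_comm, sum_div]
        refine sum_congr rfl fun r _ => ?_
        rw [← mul_sum, ← mul_sum, mul_div_assoc, mul_div_assoc]
    _ ≤ (#(univ.erase i) • (2 ^ K * (x + (Fintype.card ι - 1)) ^ K)) / Fintype.card ι := by
        gcongr
        exact sum_le_card_nsmul _ _ _ h_term
    _ ≤ (Fintype.card ι • (2 ^ K * (x + (Fintype.card ι - 1)) ^ K)) / Fintype.card ι := by
        gcongr
        exact card_le_univ _
    _ = _ := by rw [nsmul_eq_mul, mul_div_cancel_left₀ _ (by positivity)]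

theorem sum_multinomial_mul_log_likelihoodSum_le (hx : 0 ≤ x) (hb : 1 ≤ b)
    (hxb : x ≤ b * Fintype.card ι) (hK : K < Fintype.card ι) (i : ι) :
    ∑ r ∈ piAntidiag univ K,
        (Nat.multinomial univ r : ℝ) * (x ^ r i * Real.log (likelihoodSum x r)) ≤
      (K * (x * (x + (Fintype.card ι - 1)) ^ (K - 1)) + ((Fintype.card ι : ℝ) - 1) ^ K) *
          Real.log (Fintype.card ι) +
        (b ^ K + 2 ^ K) * (x + (Fintype.card ι - 1)) ^ K := by
  have h_card : (1 : ℝ) ≤ Fintype.card ι := by exact_mod_cast Fintype.card_pos_iff.2 ⟨i⟩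
  have h_own : ∑ r ∈ piAntidiag univ K, (Nat.multinomial univ r : ℝ) * (x * b) ^ r i ≤
      b ^ K * (x + (Fintype.card ι - 1)) ^ K := by
    rw [sum_multinomial_mul_pow, ← mul_pow]
    exact pow_le_pow_left₀ (by nlinarith) (by nlinarith) K
  have h_rest := sum_multinomial_mul_sum_erase_le (K := K) hx i
  calc _ ≤ ∑ r ∈ piAntidiag univ K, (Nat.multinomial univ r : ℝ) * (x ^ r i *
        ((r i + 0 ^ r i) * Real.log (Fintype.card ι) +
          (b ^ r i + (∑ j ∈ univ.erase i, x ^ r j) / Fintype.card ι))) := by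
        refine sum_le_sum fun r hr => ?_
        obtain ⟨rfl, -⟩ := mem_piAntidiag.1 hr
        gcongr
        exact log_likelihoodSum_le hx (by linarith) hxb hK i
    _ = (K * (x * (x + (Fintype.card ι - 1)) ^ (K - 1)) + ((Fintype.card ι : ℝ) - 1) ^ K) *
          Real.log (Fintype.card ι) +
        (∑ r ∈ piAntidiag univ K, (Nat.multinomial univ r : ℝ) * (x * b) ^ r i +
          ∑ r ∈ piAntidiag univ K, (Nat.multinomial univ r : ℝ) *
            (x ^ r i * ((∑ j ∈ univ.erase i, x ^ r j) / Fintype.card ι))) := by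
        rw [← sum_multinomial_mul_natCast_mul_pow K i, ← sum_multinomial_mul_zero_pow K i,
          ← sum_add_distrib, sum_mul, ← sum_add_distrib, ← sum_add_distrib]
        refine sum_congr rfl fun r _ => ?_
        have h_absorb : x ^ r i * 0 ^ r i = 0 ^ r i := by rw [← mul_pow, mul_zero]
        rw [mul_pow]
        linear_combination
          (Nat.multinomial univ r : ℝ) * Real.log (Fintype.card ι) * h_absorb
    _ ≤ _ := by linarith

end Average

section Channel

variable {q K : ℕ} {p : ℝ}

/-- The likelihood ratio of a correct draw, of probability `1 - p`, against a given error, of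
probability `p / (q - 1)`. -/
noncomputable def likelihoodRatio (q : ℕ) (p : ℝ) : ℝ :=
  (1 - p) * (q - 1) / p

theorem likelihoodRatio_nonneg (hp : p ∈ Set.Ioc 0 1) (hq : 1 ≤ q) : 0 ≤ likelihoodRatio q p :=
  div_nonneg (mul_nonneg (sub_nonneg.2 hp.2) (sub_nonneg.2 (by exact_mod_cast hq))) hp.1.le

theorem likelihoodRatio_le (hp : p ∈ Set.Ioc 0 1) : likelihoodRatio q p ≤ p⁻¹ * q := by
  rw [likelihoodRatio, inv_mul_eq_div]
  exact div_le_div_of_nonneg_right (by nlinarith [hp.1, hp.2]) hp.1.le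

theorem likelihoodRatio_add_sub_one (hp : p ≠ 0) :
    likelihoodRatio q p + (q - 1) = (q - 1) / p := by
  rw [likelihoodRatio]
  field_simp
  ring

theorem natCast_mul_likelihoodRatio_mul_pow :
    K * (likelihoodRatio q p * ((q - 1) / p) ^ (K - 1)) = K * (1 - p) * ((q - 1) / p) ^ K := by
  cases K with
  | zero => simp
  | succ n =>
    rw [likelihoodRatio, Nat.add_sub_cancel, pow_succ]
    ring

theorem sub_one_pow_eq_mul_div_pow (hp : p ≠ 0) :
    ((q : ℝ) - 1) ^ K = p ^ K * ((q - 1) / p) ^ K := by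
  rw [← mul_pow, mul_div_cancel₀ _ hp]

theorem PhiDMS_eq_sum (q K : ℕ) (p : ℝ) :
    PhiDMS q K p = ∑ i : Fin q, ∑ r ∈ piAntidiag univ K, (Nat.multinomial univ r : ℝ) *
      (likelihoodRatio q p ^ r i * Real.log (likelihoodSum (likelihoodRatio q p) r)) := by
  rw [PhiDMS, filter_piFinset_range_eq_piAntidiag, sum_comm]
  refine sum_congr rfl fun r hr => ?_
  obtain ⟨rfl, -⟩ := mem_piAntidiag.1 hr
  have h_multinomial : ((∑ i, r i).factorial : ℝ) / ∏ i, ((r i).factorial : ℝ) =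
      Nat.multinomial univ r := by
    rw [div_eq_iff (by positivity), mul_comm]
    exact_mod_cast (Nat.multinomial_spec univ r).symm
  rw [h_multinomial, ← mul_sum, ← sum_mul, mul_assoc, likelihoodSum, likelihoodRatio]

theorem le_PhiDMS (hp : p ∈ Set.Ioc 0 1) (hq : K < q) :
    q * ((q - 1) / p) ^ K *
        (K * ((1 - p) * Real.log (likelihoodRatio q p)) + p ^ K * Real.log (q - K)) ≤
      PhiDMS q K p := by
  have h_ratio := likelihoodRatio_nonneg hp (Nat.one_le_of_lt hq)
  have h_mean (i : Fin q) :=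
    le_sum_multinomial_mul_log_likelihoodSum h_ratio (by rwa [Fintype.card_fin]) i
  have h_sum := card_nsmul_le_sum univ _ _ fun i _ => h_mean i
  rw [← PhiDMS_eq_sum, card_univ, Fintype.card_fin, nsmul_eq_mul,
    likelihoodRatio_add_sub_one hp.1.ne', natCast_mul_likelihoodRatio_mul_pow,
    sub_one_pow_eq_mul_div_pow hp.1.ne'] at h_sum
  linear_combination h_sum

theorem PhiDMS_le (hp : p ∈ Set.Ioc 0 1) (hq : K < q) :
    PhiDMS q K p ≤ q * ((q - 1) / p) ^ K *
      ((K * (1 - p) + p ^ K) * Real.log q + (p⁻¹ ^ K + 2 ^ K)) := by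
  have h_ratio := likelihoodRatio_nonneg hp (Nat.one_le_of_lt hq)
  have h_mean (i : Fin q) := sum_multinomial_mul_log_likelihoodSum_le h_ratio
    ((one_le_inv₀ hp.1).2 hp.2) (by simpa only [Fintype.card_fin] using likelihoodRatio_le hp)
    (by rwa [Fintype.card_fin]) i
  have h_sum := sum_le_card_nsmul univ _ _ fun i _ => h_mean i
  rw [← PhiDMS_eq_sum, card_univ, Fintype.card_fin, nsmul_eq_mul,
    likelihoodRatio_add_sub_one hp.1.ne', natCast_mul_likelihoodRatio_mul_pow,
    sub_one_pow_eq_mul_div_pow hp.1.ne'] at h_sum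
  linear_combination h_sum

theorem capDMS_eq (hp : p ≠ 0) (hq : 2 ≤ q) :
    capDMS q K p = K * (Real.log ((q - 1) / p) / Real.log q) + 1 -
      PhiDMS q K p / (q * ((q - 1) / p) ^ K) / Real.log q - K * Hq q p := by
  have hq' : (2 : ℝ) ≤ q := by exact_mod_cast hq
  have h_log : Real.log q ≠ 0 := (Real.log_pos (by linarith)).ne'
  have hq_sub : (q : ℝ) - 1 ≠ 0 := by linarith
  rw [capDMS, div_pow]
  field_simp

end Channel

section Asymptotics

theorem tendsto_log_div_log_of_tendsto_div {α : Type*} {l : Filter α} {f g : α → ℝ} {c : ℝ}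
    (hg : Tendsto g l atTop) (hc : c ≠ 0) (h : Tendsto (fun n => f n / g n) l (𝓝 c)) :
    Tendsto (fun n => Real.log (f n) / Real.log (g n)) l (𝓝 1) := by
  have h_log : Tendsto (fun n => Real.log (g n)) l atTop := Real.tendsto_log_atTop.comp hg
  have h_quot : Tendsto (fun n => Real.log (f n / g n) / Real.log (g n) + 1) l (𝓝 1) := by
    simpa using ((h.log hc).div_atTop h_log).add_const 1
  refine h_quot.congr' ?_
  filter_upwards [h.eventually_ne hc, h_log.eventually_ne_atTop 0] with n hn h_log_ne
  obtain ⟨hf_ne, hg_ne⟩ := div_ne_zero_iff.1 hn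
  rw [Real.log_div hf_ne hg_ne]
  field_simp
  ring

theorem tendsto_log_mul_natCast_sub_div_log {c : ℝ} (hc : c ≠ 0) (d : ℝ) :
    Tendsto (fun q : ℕ => Real.log (c * (q - d)) / Real.log q) atTop (𝓝 1) := by
  refine tendsto_log_div_log_of_tendsto_div tendsto_natCast_atTop_atTop hc ?_
  have h_quot : Tendsto (fun q : ℕ => c * (1 - d / q)) atTop (𝓝 c) := by
    simpa using ((tendsto_const_div_atTop_nhds_zero_nat d).const_sub 1).const_mul c
  refine h_quot.congr' ?_
  filter_upwards [eventually_ne_atTop 0] with q hq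
  field_simp

theorem tendsto_log_natCast_atTop : Tendsto (fun q : ℕ => Real.log q) atTop atTop :=
  Real.tendsto_log_atTop.comp tendsto_natCast_atTop_atTop

theorem tendsto_Hq (p : ℝ) : Tendsto (fun q => Hq q p) atTop (𝓝 p) := by
  have h_main := (tendsto_log_mul_natCast_sub_div_log one_ne_zero 1).const_mul p
  have h_const := tendsto_log_natCast_atTop.const_div_atTop
    (p * Real.log p + (1 - p) * Real.log (1 - p))
  have h_sub := h_main.sub h_const
  simp only [one_mul, mul_one, sub_zero] at h_sub
  refine h_sub.congr fun q => ?_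
  rw [Hq]
  ring

theorem tendsto_mul_log_likelihoodRatio_div_log {p : ℝ} (hp : p ≠ 0) :
    Tendsto (fun q : ℕ => (1 - p) * Real.log (likelihoodRatio q p) / Real.log q) atTop
      (𝓝 (1 - p)) := by
  rcases eq_or_ne p 1 with rfl | hp_one
  · simp
  · have h_ne : (1 - p) / p ≠ 0 := div_ne_zero (sub_ne_zero.2 hp_one.symm) hp
    simpa only [likelihoodRatio, mul_one, mul_div_assoc, div_mul_eq_mul_div] using
      (tendsto_log_mul_natCast_sub_div_log h_ne 1).const_mul (1 - p)

theorem tendsto_PhiDMS_div (K : ℕ) {p : ℝ} (hp : p ∈ Set.Ioc 0 1) :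
    Tendsto (fun q : ℕ => PhiDMS q K p / (q * ((q - 1) / p) ^ K) / Real.log q) atTop
      (𝓝 (K * (1 - p) + p ^ K)) := by
  have h_lower := ((tendsto_mul_log_likelihoodRatio_div_log hp.1.ne').const_mul (K : ℝ)).add
    ((tendsto_log_mul_natCast_sub_div_log one_ne_zero (K : ℝ)).const_mul (p ^ K))
  have h_upper := (tendsto_log_natCast_atTop.const_div_atTop (p⁻¹ ^ K + 2 ^ K)).const_add
    (K * (1 - p) + p ^ K)
  simp only [one_mul, mul_one] at h_lower
  rw [add_zero] at h_upper
  have h_large : ∀ᶠ q : ℕ in atTop,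
      K < q ∧ 0 < (q : ℝ) * ((q - 1) / p) ^ K ∧ 0 < Real.log q := by
    filter_upwards [eventually_gt_atTop K, eventually_ge_atTop 2] with q hqK hq
    have hq' : (1 : ℝ) < q := by exact_mod_cast hq
    have h_scale : 0 < ((q : ℝ) - 1) / p := div_pos (sub_pos.2 hq') hp.1
    exact ⟨hqK, by positivity, Real.log_pos hq'⟩
  refine tendsto_of_tendsto_of_tendsto_of_le_of_le' h_lower h_upper ?_ ?_
  · filter_upwards [h_large] with q ⟨hq, h_scale, h_log_pos⟩
    rw [← mul_div_assoc, ← mul_div_assoc, ← add_div, div_le_div_iff_of_pos_right h_log_pos,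
      le_div_iff₀' h_scale]
    exact le_PhiDMS hp hq
  · filter_upwards [h_large] with q ⟨hq, h_scale, h_log_pos⟩
    rw [div_le_iff₀ h_log_pos, add_mul, div_mul_cancel₀ _ h_log_pos.ne', div_le_iff₀' h_scale]
    exact PhiDMS_le hp hq

end Asymptotics

theorem stmt3_general (K : ℕ) {p : ℝ} (hp : p ∈ Set.Ioc (0 : ℝ) 1) :
    Tendsto (fun q : ℕ => capDMS q K p) atTop (𝓝 (1 - p ^ K)) := by
  have h_scale := tendsto_log_mul_natCast_sub_div_log (inv_ne_zero hp.1.ne') 1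
  have h_limit := (((h_scale.const_mul (K : ℝ)).add_const 1).sub (tendsto_PhiDMS_div K hp)).sub
    ((tendsto_Hq p).const_mul (K : ℝ))
  have h_value : K * 1 + 1 - (K * (1 - p) + p ^ K) - K * p = 1 - p ^ K := by ring
  rw [h_value] at h_limit
  refine h_limit.congr' ?_
  filter_upwards [eventually_ge_atTop 2] with q hq
  rw [capDMS_eq hp.1.ne' hq, inv_mul_eq_div]

/-- For fixed K ≥ 2 and p ∈ (0,1), the capacity of DMS_{q,K}(p) tends to 1 − p^K
as the alphabet size q → ∞ over the integers. -/
theorem stmt3 (K : ℕ) (hK : 2 ≤ K) (p : ℝ) (hp : p ∈ Set.Ioo (0 : ℝ) 1) :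
    Filter.Tendsto (fun q : ℕ => capDMS q K p) Filter.atTop (nhds (1 - p ^ K)) := by
  exact stmt3_general K (Set.Ioo_subset_Ioc_self hp)
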